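/- Let F be a division ring, G a division subring of F, and (f_i)_{i∈ℕ} a sequence in F with f_0 = 1 satisfying axioms (T4), (T5), (T6). Then for every k ≥ 1 there exists b ∈ D_k with b ∉ S_k such that every x ∈ D_k can be written uniquely as x = s + b·t with s, t ∈ S_k; that is, {1, b} is a basis of D_k as a right S_k-vector space and D_k has right dimension 2 over S_k. -/

import Mathlib

/-- `L_k`: the left `G`-subspace of `F` spanned by `f_0, …, f_k`. -/
def Lset {F : Type*} [DivisionRing F] (G : Subring F) (f : ℕ → F) (k : ℕ) : Set F :=
  {x | ∃ c : ℕ → F, (∀ i, c i ∈ G) ∧ x = ∑ i ∈ Finset.range (k + 1), c i * f i}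

/-- `S_k = {a ∈ F : L_k · a ⊆ L_k}`. -/
def Sset {F : Type*} [DivisionRing F] (G : Subring F) (f : ℕ → F) (k : ℕ) : Set F :=
  {a | ∀ x ∈ Lset G f k, x * a ∈ Lset G f k}

/-- `D_0 = F`, and `D_k = {a ∈ F : L_{k-1} · a ⊆ L_k}` for `k ≥ 1`. -/
def Dset {F : Type*} [DivisionRing F] (G : Subring F) (f : ℕ → F) : ℕ → Set F
  | 0 => Set.univ
  | k + 1 => {a | ∀ x ∈ Lset G f k, x * a ∈ Lset G f (k + 1)}

/-!
The engine is the claim `F = L_k + c·S_k` for some `c`, i.e. `F / L_k` is spanned by one vector as a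
right `S_k`-space. Right multiplication by a nonzero `a ∈ S_k` is an injective `G`-linear
endomorphism of the finite-dimensional space `L_k`, so `S_k` is a division ring, and therefore any
`y ∉ L_k` can replace `c`. Taking `y ∈ L_{k+1}`, we have `S_k ⊆ D_{k+1} = S_{k+1} + b·S_{k+1}` and
thus `F = L_k + y·S_k = L_{k+1} + yb·S_{k+1}`, which propagates the claim from `k` to `k + 1`.
The same identity forces `b ∉ S_{k+1}`: otherwise `yb·S_{k+1} ⊆ L_{k+1}` and `F = L_{k+1}`,
contradicting the independence of the `f_i`. Finally `1, b` are right independent over the division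
ring `S_{k+1}` because `b` lies outside it.
-/

section Stabilizer

variable {K F : Type*} [Ring K] [Ring F] [Module K F] {V W : Submodule K F} {b y : F}

/-- The elements of `F` that carry `V` into `W` by right multiplication. For `V = L_{k-1}` and
`W = L_k`, with `k ≥ 1`, this is `D_k`. -/
def rightTransporter (V W : Submodule K F) : Set F := {a | ∀ x ∈ V, x * a ∈ W}

/-- The subring of elements of `F` that map `V` into itself by right multiplication. For `V = L_k`
this is `S_k`. -/
def rightStabilizer (V : Submodule K F) : Subring F where
  carrier := rightTransporter V V
  one_mem' x hx := by rwa [mul_one]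
  mul_mem' ha hb x hx := by
    rw [← mul_assoc]
    exact hb _ (ha x hx)
  zero_mem' x _ := by
    rw [mul_zero]
    exact V.zero_mem
  add_mem' ha hb x hx := by
    rw [mul_add]
    exact V.add_mem (ha x hx) (hb x hx)
  neg_mem' ha x hx := by
    rw [mul_neg]
    exact V.neg_mem (ha x hx)

theorem rightStabilizer_subset_rightTransporter (hVW : V ≤ W) :
    (rightStabilizer V : Set F) ⊆ rightTransporter V W :=
  fun _ ha x hx => hVW (ha x hx)

/-- `D ⊆ E + b · E`: the elements `1` and `b` span `D` over `E` acting on the right. The conclusion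
of axiom (T6) is the case `E = S_k`, `D = D_k`. -/
def SpansWithOne (E : Subring F) (b : F) (D : Set F) : Prop :=
  ∀ x ∈ D, ∃ s ∈ E, ∃ t ∈ E, x = s + b * t

/-- `F = V + c · rightStabilizer V`: the class of `c` spans `F ⧸ V` as a right module over the
stabilizer of `V`, stated elementwise to avoid putting that module structure on the quotient. -/
def SpansModulo (V : Submodule K F) (c : F) : Prop :=
  ∀ x : F, ∃ v ∈ V, ∃ s ∈ rightStabilizer V, x = v + c * s

namespace SpansModulo

theorem mul_of_le (h : SpansModulo V y) (hVW : V ≤ W) (hy : y ∈ W)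
    (hb : SpansWithOne (rightStabilizer W) b (rightTransporter V W)) :
    SpansModulo W (y * b) := by
  intro x
  obtain ⟨v, hv, a, ha, rfl⟩ := h x
  obtain ⟨s, hs, t, ht, rfl⟩ := hb a (rightStabilizer_subset_rightTransporter hVW ha)
  refine ⟨v + y * s, W.add_mem (hVW hv) (hs y hy), t, ht, ?_⟩
  rw [mul_add, ← mul_assoc, add_assoc]

theorem eq_top_of_mem {c : F} (h : SpansModulo V c) (hc : c ∈ V) : V = ⊤ := by
  refine V.eq_top_iff'.mpr fun x => ?_
  obtain ⟨v, hv, s, hs, rfl⟩ := h x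
  exact V.add_mem hv (hs c hc)

end SpansModulo

end Stabilizer

section DivisionRing

variable {F : Type*} [DivisionRing F] {b : F}

theorem add_mul_inj_of_notMem {E : Subring F} (hE : ∀ a ∈ E, a⁻¹ ∈ E) (hb : b ∉ E)
    {s t s' t' : F} (hs : s ∈ E) (ht : t ∈ E) (hs' : s' ∈ E) (ht' : t' ∈ E) :
    s + b * t = s' + b * t' ↔ s = s' ∧ t = t' := by
  refine ⟨fun h => ?_, fun h => by rw [h.1, h.2]⟩
  have hsub : b * (t - t') = s' - s := by
    rw [mul_sub, sub_eq_sub_iff_add_eq_add, add_comm, h]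
  obtain rfl : t = t' := by
    by_contra hne
    refine hb ?_
    rw [(eq_mul_inv_iff_mul_eq₀ (sub_ne_zero.mpr hne)).mpr hsub]
    exact E.mul_mem (E.sub_mem hs' hs) (hE _ (E.sub_mem ht ht'))
  exact ⟨add_right_cancel h, rfl⟩

variable {K : Type*} [DivisionRing K] [Module K F] [IsScalarTower K F F] {V W : Submodule K F}
  {c y : F}

theorem inv_mem_rightStabilizer [FiniteDimensional K V] {a : F} (ha : a ∈ rightStabilizer V) :
    a⁻¹ ∈ rightStabilizer V := by
  obtain rfl | ha0 := eq_or_ne a 0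
  · rwa [inv_zero]
  let φ : V →ₗ[K] V := (LinearMap.mulRight K a).restrict ha
  have φ_injective : Function.Injective φ := fun x y hxy =>
    Subtype.ext (mul_right_cancel₀ ha0 (congrArg Subtype.val hxy))
  intro x hx
  obtain ⟨y, hy⟩ := LinearMap.surjective_of_injective φ_injective ⟨x, hx⟩
  have hyx : y * a = x := congrArg Subtype.val hy
  rw [← hyx, mul_inv_cancel_right₀ ha0]
  exact y.2

namespace SpansModulo

theorem of_notMem [FiniteDimensional K V] (h : SpansModulo V c) (hy : y ∉ V) :
    SpansModulo V y := by
  obtain ⟨v, hv, s, hs, rfl⟩ := h y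
  have hs0 : s ≠ 0 := by
    rintro rfl
    exact hy (by rwa [mul_zero, add_zero])
  intro x
  obtain ⟨w, hw, t, ht, rfl⟩ := h x
  have hst : s⁻¹ * t ∈ rightStabilizer V :=
    (rightStabilizer V).mul_mem (inv_mem_rightStabilizer hs) ht
  refine ⟨w - v * (s⁻¹ * t), V.sub_mem hw (hst v hv), s⁻¹ * t, hst, ?_⟩
  rw [add_mul, mul_assoc c, mul_inv_cancel_left₀ hs0, ← add_assoc, sub_add_cancel]

theorem exists_mul_of_lt [FiniteDimensional K V] (h : SpansModulo V c) (hVW : V < W)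
    (hb : SpansWithOne (rightStabilizer W) b (rightTransporter V W)) :
    ∃ y ∈ W, SpansModulo W (y * b) := by
  obtain ⟨y, hyW, hyV⟩ := SetLike.exists_of_lt hVW
  exact ⟨y, hyW, (h.of_notMem hyV).mul_of_le hVW.le hyW hb⟩

theorem notMem_rightStabilizer [FiniteDimensional K V] (h : SpansModulo V c) (hVW : V < W)
    (hW : W ≠ ⊤) (hb : SpansWithOne (rightStabilizer W) b (rightTransporter V W)) :
    b ∉ rightStabilizer W := by
  intro hbW
  obtain ⟨y, hyW, hspan⟩ := h.exists_mul_of_lt hVW hb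
  exact hW (hspan.eq_top_of_mem (hbW y hyW))

end SpansModulo

theorem exists_spansModulo_of_strictMono {L : ℕ → Submodule K F} [∀ k, FiniteDimensional K (L k)]
    (hL : StrictMono L) (h₀ : ∃ c, SpansModulo (L 0) c)
    (hb : ∀ k, ∃ b, SpansWithOne (rightStabilizer (L (k + 1))) b
      (rightTransporter (L k) (L (k + 1)))) (k : ℕ) :
    ∃ c, SpansModulo (L k) c := by
  induction k with
  | zero => exact h₀
  | succ k ih =>
    obtain ⟨c, hc⟩ := ih
    obtain ⟨b, hb⟩ := hb k
    obtain ⟨y, -, hy⟩ := hc.exists_mul_of_lt (hL k.lt_succ_self) hb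
    exact ⟨y * b, hy⟩

end DivisionRing

section InitialSpan

variable {R M : Type*}

theorem linearIndependent_of_forall_range [Ring R] [AddCommGroup M] [Module R M] {v : ℕ → M}
    (h : ∀ (c : ℕ → R) (m : ℕ), ∑ i ∈ Finset.range m, c i • v i = 0 → ∀ i < m, c i = 0) :
    LinearIndependent R v := by
  rw [linearIndependent_iff'']
  intro s c hc hsum i
  by_cases his : i ∈ s
  · have hs := s.subset_range_sup_succ
    refine h c _ ?_ i (Finset.mem_range.mp (hs his))
    rwa [← Finset.sum_subset hs fun j _ hj => by rw [hc j hj, zero_smul]]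
  · exact hc i his

/-- The span of `f 0, …, f k`, endpoint included; for the sequence of the theorem this is `L_k`. -/
def initialSpan (R : Type*) {M : Type*} [Semiring R] [AddCommMonoid M] [Module R M] (f : ℕ → M)
    (k : ℕ) : Submodule R M :=
  Submodule.span R (f '' Finset.range (k + 1))

instance finiteDimensional_initialSpan [DivisionRing R] [AddCommGroup M] [Module R M] (f : ℕ → M)
    (k : ℕ) : FiniteDimensional R (initialSpan R f k) :=
  FiniteDimensional.span_of_finite R ((Finset.finite_toSet _).image f)

theorem strictMono_initialSpan [Semiring R] [Nontrivial R] [AddCommMonoid M] [Module R M]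
    {f : ℕ → M} (hf : LinearIndependent R f) : StrictMono (initialSpan R f) := by
  refine strictMono_nat_of_lt_succ fun k => SetLike.lt_iff_le_and_exists.mpr ⟨?_, f (k + 1), ?_, ?_⟩
  · exact Submodule.span_mono (Set.image_mono (by simp))
  · exact Submodule.subset_span (Set.mem_image_of_mem f (by simp))
  · exact hf.notMem_span_image (by simp)

end InitialSpan

section Subfield

variable {F : Type*} [DivisionRing F] (K : Subfield F) (f : ℕ → F) (k : ℕ)

theorem Lset_toSubring : Lset K.toSubring f k = initialSpan K f k := by
  ext x
  rw [SetLike.mem_coe, initialSpan, Submodule.mem_span_image_finset_iff_exists_fun']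
  constructor
  · rintro ⟨c, hc, rfl⟩
    exact ⟨fun i => ⟨c i, hc i⟩, rfl⟩
  · rintro ⟨c, rfl⟩
    exact ⟨fun i => c i, fun i => (c i).2, rfl⟩

theorem Sset_toSubring : Sset K.toSubring f k = rightStabilizer (initialSpan K f k) := by
  rw [Sset, Lset_toSubring]
  rfl

theorem Dset_toSubring_succ :
    Dset K.toSubring f (k + 1) =
      rightTransporter (initialSpan K f k) (initialSpan K f (k + 1)) := by
  rw [Dset, Lset_toSubring, Lset_toSubring]
  rfl

variable {K f}

theorem mem_initialSpan_zero (hf0 : f 0 = 1) {x : F} : x ∈ initialSpan K f 0 ↔ x ∈ K := by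
  simp [initialSpan, hf0, Submodule.mem_span_singleton, Subfield.smul_def]

theorem spansModulo_initialSpan_zero (hf0 : f 0 = 1) {c : F}
    (h : ∀ x : F, ∃ a ∈ K, ∃ b ∈ K, x = a + c * b) : SpansModulo (initialSpan K f 0) c := by
  intro x
  obtain ⟨a, ha, b, hb, rfl⟩ := h x
  refine ⟨a, (mem_initialSpan_zero hf0).mpr ha, b, fun y hy => ?_, rfl⟩
  rw [mem_initialSpan_zero hf0] at hy ⊢
  exact K.mul_mem hy hb

end Subfield

/-- In a model of the theory `T`, `{1, b}` is a basis of `D_k` as a right `S_k`-vector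
space for a suitable `b ∈ D_k \ S_k`; in particular `dim (D_k)_{S_k} = 2`. -/
theorem stmt10 {F : Type*} [DivisionRing F]
    (G : Subring F) (hG : ∀ x ∈ G, x⁻¹ ∈ G)
    (f : ℕ → F) (hf0 : f 0 = 1)
    (T4 : ∀ x : F, ∃ a ∈ G, ∃ b ∈ G, x = a + f 1 * b)
    (T5 : ∀ c : ℕ → F, (∀ i, c i ∈ G) →
      ∀ m : ℕ, ∑ i ∈ Finset.range m, c i * f i = 0 → ∀ i < m, c i = 0)
    (T6 : ∀ k : ℕ, 1 ≤ k → ∃ b ∈ Dset G f k,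
      ∀ x ∈ Dset G f k, ∃ s ∈ Sset G f k, ∃ t ∈ Sset G f k, x = s + b * t) :
    ∀ k : ℕ, 1 ≤ k → ∃ b ∈ Dset G f k, b ∉ Sset G f k ∧
      ∀ x ∈ Dset G f k, ∃ s ∈ Sset G f k, ∃ t ∈ Sset G f k, (x = s + b * t ∧
        ∀ s' t' : F, s' ∈ Sset G f k → t' ∈ Sset G f k → x = s' + b * t' →
          s' = s ∧ t' = t) := by
  obtain ⟨K, rfl⟩ : ∃ K : Subfield F, K.toSubring = G := ⟨{ G with inv_mem' := hG }, rfl⟩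
  have hL : StrictMono (initialSpan K f) :=
    strictMono_initialSpan <| linearIndependent_of_forall_range fun c m hc i hi =>
      Subtype.ext (T5 (fun j => c j) (fun j => (c j).2) m hc i hi)
  rintro (_ | k) hk
  · contradiction
  replace T6 (k : ℕ) := T6 (k + 1) k.succ_pos
  simp only [Dset_toSubring_succ, Sset_toSubring, SetLike.mem_coe] at T6 ⊢
  obtain ⟨c, hc⟩ : ∃ c, SpansModulo (initialSpan K f k) c :=
    exists_spansModulo_of_strictMono hL ⟨f 1, spansModulo_initialSpan_zero hf0 T4⟩
      (fun j => (T6 j).imp fun _ => And.right) k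
  obtain ⟨b, hbD, hb⟩ := T6 k
  have hbS : b ∉ rightStabilizer (initialSpan K f (k + 1)) :=
    hc.notMem_rightStabilizer (hL k.lt_succ_self) (hL (k + 1).lt_succ_self).ne_top hb
  refine ⟨b, hbD, hbS, fun x hx => ?_⟩
  obtain ⟨s, hs, t, ht, rfl⟩ := hb x hx
  refine ⟨s, hs, t, ht, rfl, fun s' t' hs' ht' h => ?_⟩
  exact (add_mul_inj_of_notMem (fun _ => inv_mem_rightStabilizer) hbS hs' ht' hs ht).mp h.symm
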